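/- Let K be a q-arc in PG(n,q) with q ≥ n+3 (n ≥ 2), or q = p = n+2 a prime with n ≥ 2. Then the closure of K is all of PG(n,q). -/

import Mathlib

open scoped LinearAlgebra.Projectivization

variable {F : Type*} [Field F] {n : ℕ}

/-- A point set `K` of a projective space `PG(n,q)` is an arc if it has at least `n+1` points
and no `n+1` of its points lie on a hyperplane, i.e. every `n+1` of its points span. -/
def IsArc {F V : Type*} [Field F] [AddCommGroup V] [Module F V] (n : ℕ) (K : Set (ℙ F V)) :
    Prop :=
  n + 1 ≤ K.ncard ∧
    ∀ S : Finset (ℙ F V), ↑S ⊆ K → S.card = n + 1 → (⨆ p ∈ S, p.submodule) = ⊤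

/-- A set `T` of projective points is closed under taking intersection points: whenever two
subspaces spanned by points of `T` intersect in exactly one projective point, that point
belongs to `T`. -/
def ClosedUnderMeets {F V : Type*} [Field F] [AddCommGroup V] [Module F V]
    (T : Set (ℙ F V)) : Prop :=
  ∀ A B : Set (ℙ F V), A ⊆ T → B ⊆ T → ∀ x : ℙ F V,
    (⨆ p ∈ A, p.submodule) ⊓ (⨆ p ∈ B, p.submodule) = x.submodule → x ∈ T

/-- The closure of a set `S` of projective points: the smallest set containing `S` that is
closed under adding the intersection point of any two spanned subspaces meeting in exactly
one point. -/
def ptClosure {F V : Type*} [Field F] [AddCommGroup V] [Module F V] (S : Set (ℙ F V)) :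
    Set (ℙ F V) :=
  ⋂₀ {T | S ⊆ T ∧ ClosedUnderMeets T}

/-!
A set of points that contains a frame and is closed under meets consists of the points with
coordinates in a subfield `E`: von Staudt's constructions of sums and products can be carried out on
the edges of the simplex of reference. Suppose that an arc `K` lies in such a subgeometry and
contains the vertices of the simplex. No hyperplane through all but two of the vertices contains two
further points of `K`. Hence, for points of `K` off the simplex, the ratio of two fixed coordinates
determines the point, so that `|K| ≤ |E| + n`. If there are two such points `p` and `r`, the
quotients `p i / r i` are pairwise distinct, so that `n + 2 ≤ |E|`. If `E` is proper, then
`|E| ^ 2 ≤ q`, and the two bounds exclude `|K| = q`.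
-/

section ProjCone

variable {V : Type*} [AddCommGroup V] [Module F V] {T : Set (ℙ F V)}

/-- The punctured cone over a set `T` of projective points: the nonzero vectors representing a
point of `T`. -/
def projCone (T : Set (ℙ F V)) : Set V :=
  {v | ∃ p ∈ T, p.submodule = Submodule.span F {v}}

lemma projCone_mono {T' : Set (ℙ F V)} (h : T ⊆ T') : projCone T ⊆ projCone T' :=
  fun _ ⟨p, hp, hpv⟩ ↦ ⟨p, h hp, hpv⟩

lemma mk_mem_iff_mem_projCone {v : V} (hv : v ≠ 0) :
    Projectivization.mk F v hv ∈ T ↔ v ∈ projCone T := by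
  refine ⟨fun h ↦ ⟨_, h, Projectivization.submodule_mk v hv⟩, ?_⟩
  rintro ⟨p, hp, hpv⟩
  rw [← Projectivization.submodule_mk v hv] at hpv
  exact Projectivization.submodule_injective hpv ▸ hp

lemma rep_mem_projCone_iff {p : ℙ F V} : p.rep ∈ projCone T ↔ p ∈ T := by
  rw [← mk_mem_iff_mem_projCone p.rep_nonzero, Projectivization.mk_rep]

lemma smul_mem_projCone {c : F} (hc : c ≠ 0) {v : V} (hv : v ∈ projCone T) :
    c • v ∈ projCone T := by
  obtain ⟨p, hp, hpv⟩ := hv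
  exact ⟨p, hp, by rw [hpv, Submodule.span_singleton_smul_eq hc.isUnit]⟩

lemma exists_iSup_submodule_eq_span {A : Set V} (hA : A ⊆ projCone T) :
    ∃ A' ⊆ T, (⨆ p ∈ A', p.submodule) = Submodule.span F A := by
  refine ⟨{p ∈ T | ∃ v ∈ A, p.submodule = Submodule.span F {v}}, Set.sep_subset _ _,
    le_antisymm (iSup₂_le ?_) (Submodule.span_le.2 ?_)⟩
  · rintro p ⟨-, v, hv, hpv⟩
    exact hpv ▸ Submodule.span_mono (Set.singleton_subset_iff.2 hv)
  · intro v hv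
    obtain ⟨p, hp, hpv⟩ := hA hv
    have hle : p.submodule ≤ ⨆ p ∈ {p ∈ T | ∃ v ∈ A, p.submodule = Submodule.span F {v}},
        p.submodule := le_iSup₂_of_le p ⟨hp, v, hv, hpv⟩ le_rfl
    exact hle (hpv ▸ Submodule.mem_span_singleton_self v)

lemma closedUnderMeets_ptClosure (S : Set (ℙ F V)) : ClosedUnderMeets (ptClosure S) := by
  intro A B hA hB x hx T hT
  exact hT.2 A B (hA.trans (Set.sInter_subset_of_mem hT)) (hB.trans (Set.sInter_subset_of_mem hT))
    x hx

/-- The line through `v` and `w` meets the span of `A` in a single point, because the functional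
`f` excludes `w` from that span. -/
lemma ClosedUnderMeets.add_smul_mem_projCone (hT : ClosedUnderMeets T) {A : Set V}
    (hA : A ⊆ projCone T) {v w : V} (hv : v ∈ projCone T) (hw : w ∈ projCone T)
    (f : V →ₗ[F] F) (hfA : ∀ a ∈ A, f a = 0) (hfw : f w ≠ 0) {c : F} (hne : v + c • w ≠ 0)
    (hmem : v + c • w ∈ Submodule.span F A) : v + c • w ∈ projCone T := by
  have hker : Submodule.span F A ≤ LinearMap.ker f := Submodule.span_le.2 hfA
  obtain ⟨A', hA'T, hA'⟩ := exists_iSup_submodule_eq_span hA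
  obtain ⟨L, hLT, hL⟩ := exists_iSup_submodule_eq_span
    (Set.insert_subset hv (Set.singleton_subset_iff.2 hw))
  rw [← mk_mem_iff_mem_projCone hne]
  refine hT L A' hLT hA'T _ ?_
  rw [hL, hA', Projectivization.submodule_mk]
  refine le_antisymm ?_ ?_
  · rintro y ⟨hyL, hyA⟩
    obtain ⟨r, s, rfl⟩ := Submodule.mem_span_pair.1 hyL
    have hv0 : f v + c * f w = 0 := by simpa using hker hmem
    have hy0 : r * f v + s * f w = 0 := by simpa using hker hyA
    have hs : s = r * c := by
      have : (s - r * c) * f w = 0 := by linear_combination hy0 - r * hv0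
      exact sub_eq_zero.1 ((mul_eq_zero.1 this).resolve_right hfw)
    exact Submodule.mem_span_singleton.2 ⟨r, by rw [hs, smul_add, smul_smul]⟩
  · rw [Submodule.span_singleton_le_iff_mem]
    exact ⟨Submodule.mem_span_pair.2 ⟨1, c, by rw [one_smul]⟩, hmem⟩

lemma basis_add_smul_ne_zero {ι : Type*} (b : Module.Basis ι F V) {i j : ι} (hij : i ≠ j) (x : F) :
    b i + x • b j ≠ 0 := by
  intro h
  simpa [hij] using congrArg (b.coord i) h

end ProjCone

namespace ClosedUnderMeets

variable {V ι : Type*} [AddCommGroup V] [Module F V] {b : Module.Basis ι F V} {T : Set (ℙ F V)}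
  {i j k : ι} {x y : F} {v : V}

section Basis

variable (hT : ClosedUnderMeets T) (hb : ∀ i, b i ∈ projCone T)

include hT hb

lemma basis_add_neg_mul_smul_mem_projCone (hij : i ≠ j) (hik : i ≠ k) (hjk : j ≠ k)
    (hx : b i + x • b j ∈ projCone T) (hy : b j + y • b k ∈ projCone T) :
    b i + (-(x * y)) • b k ∈ projCone T := by
  have hmeet : b i + (-(x * y)) • b k = (b i + x • b j) + (-x) • (b j + y • b k) := by module
  rw [hmeet]
  refine hT.add_smul_mem_projCone (A := {b i, b k}) (by grind) hx hy (b.coord j) ?_ ?_ ?_ ?_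
  · simp [hij, hjk.symm]
  · simp [hjk.symm]
  · exact hmeet ▸ basis_add_smul_ne_zero b hik _
  · exact hmeet ▸ Submodule.mem_span_pair.2 ⟨1, -(x * y), by rw [one_smul]⟩

lemma basis_add_neg_mul_smul_mem_projCone_of_forall (hι : 3 ≤ ENat.card ι)
    (hx : ∀ i j, i ≠ j → b i + x • b j ∈ projCone T)
    (hy : ∀ i j, i ≠ j → b i + y • b j ∈ projCone T) (hij : i ≠ j) :
    b i + (-(x * y)) • b j ∈ projCone T := by
  obtain ⟨k, hki, hkj⟩ := ENat.exists_ne_ne_of_three_le hι i j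
  exact hT.basis_add_neg_mul_smul_mem_projCone hb hki.symm hij hkj (hx i k hki.symm) (hy k j hkj)

lemma sub_repr_smul_mem_projCone (hv : v ∈ projCone T) (hne : v - b.repr v k • b k ≠ 0) :
    v - b.repr v k • b k ∈ projCone T := by
  rw [sub_eq_add_neg, ← neg_smul] at hne ⊢
  refine hT.add_smul_mem_projCone (A := b '' {k}ᶜ) (Set.image_subset_iff.2 fun l _ ↦ hb l)
    hv (hb k) (b.coord k) ?_ (by simp) hne ?_
  · rintro _ ⟨l, hl, rfl⟩
    simpa using Finsupp.single_eq_of_ne' hl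
  · rw [b.mem_span_image]
    rintro l hl rfl
    simp at hl

lemma sub_sum_repr_smul_mem_projCone (hv : v ∈ projCone T) (hi : b.repr v i ≠ 0) {s : Finset ι}
    (his : i ∉ s) : v - ∑ k ∈ s, b.repr v k • b k ∈ projCone T := by
  classical
  induction s using Finset.induction_on with
  | empty => simpa using hv
  | insert k s hks ih =>
    rw [Finset.mem_insert, not_or] at his
    have hrepr {l : ι} (hl : l ∉ s) :
        b.repr (v - ∑ k ∈ s, b.repr v k • b k) l = b.repr v l := by
      simp [Finsupp.single_apply, hl]
    have herase := hT.sub_repr_smul_mem_projCone hb (k := k) (ih his.2)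
    rw [hrepr hks, sub_sub, add_comm,
      ← Finset.sum_insert (f := fun k ↦ b.repr v k • b k) hks] at herase
    refine herase fun h ↦ hi ?_
    simpa [Finsupp.single_apply, his.1, his.2] using congrArg (b.coord i) h

lemma add_smul_mem_projCone_of_repr (hv : v ∈ projCone T) (hik : i ≠ k) (hi : b.repr v i = 1)
    (hk : b.repr v k = 0) (hx : b i + x • b k ∈ projCone T) : v + x • b k ∈ projCone T := by
  refine hT.add_smul_mem_projCone (A := insert (b i + x • b k) (b '' {i, k}ᶜ))
    (Set.insert_subset hx (Set.image_subset_iff.2 fun l _ ↦ hb l)) hv (hb k)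
    (b.coord k - x • b.coord i) ?_ (by simp [hik.symm]) ?_ ?_
  · rintro _ (rfl | ⟨l, hl, rfl⟩)
    · simp [hik, hik.symm]
    · simp only [Set.mem_compl_iff, Set.mem_insert_iff, Set.mem_singleton_iff, not_or] at hl
      simp [Ne.symm hl.1, Ne.symm hl.2]
  · intro h
    simpa [hi, hik] using congrArg (b.coord i) h
  · refine Submodule.mem_span_insert.2 ⟨1, v - b i, ?_, by module⟩
    rw [b.mem_span_image]
    rintro l hl (rfl | rfl)
    · simp [hi] at hl
    · simp [hk, hik] at hl

lemma basis_add_div_smul_mem_projCone [Finite ι] (hv : v ∈ projCone T) (hij : i ≠ j)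
    (hi : b.repr v i ≠ 0) : b i + (b.repr v j / b.repr v i) • b j ∈ projCone T := by
  classical
  cases nonempty_fintype ι
  have hpair := hT.sub_sum_repr_smul_mem_projCone hb hv hi
    (s := (Finset.univ.erase i).erase j) (by simp)
  have hv' : v = b.repr v i • b i + (b.repr v j • b j
      + ∑ k ∈ (Finset.univ.erase i).erase j, b.repr v k • b k) := by
    rw [Finset.add_sum_erase _ (fun k ↦ b.repr v k • b k) (by simp [hij.symm]),
      Finset.add_sum_erase _ (fun k ↦ b.repr v k • b k) (Finset.mem_univ i), b.sum_repr]
  rw [sub_eq_of_eq_add (hv'.trans (add_assoc _ _ _).symm)] at hpair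
  convert smul_mem_projCone (inv_ne_zero hi) hpair using 1
  rw [smul_add, smul_smul, smul_smul, inv_mul_cancel₀ hi, one_smul, div_eq_inv_mul]

end Basis

section Frame

variable [Fintype ι] (hT : ClosedUnderMeets T) (hb : ∀ i, b i ∈ projCone T)
  (hsum : ∑ i, b i ∈ projCone T)

include hT hb hsum

lemma basis_add_mem_projCone (hij : i ≠ j) : b i + (1 : F) • b j ∈ projCone T := by
  simpa [Finsupp.single_apply] using
    hT.basis_add_div_smul_mem_projCone hb hsum hij (by simp)

variable (hι : 3 ≤ ENat.card ι)

include hι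

lemma basis_add_neg_one_smul_mem_projCone (hij : i ≠ j) : b i + (-1 : F) • b j ∈ projCone T := by
  obtain ⟨k, hki, hkj⟩ := ENat.exists_ne_ne_of_three_le hι i j
  simpa using hT.basis_add_neg_mul_smul_mem_projCone hb hki.symm hij hkj
    (hT.basis_add_mem_projCone hb hsum hki.symm) (hT.basis_add_mem_projCone hb hsum hkj)

lemma basis_add_smul_mem_projCone_right (hij : i ≠ j) (hik : i ≠ k)
    (hx : b i + x • b j ∈ projCone T) : b i + x • b k ∈ projCone T := by
  obtain rfl | hjk := eq_or_ne j k
  · exact hx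
  · simpa using hT.basis_add_neg_mul_smul_mem_projCone hb hij hik hjk hx
      (hT.basis_add_neg_one_smul_mem_projCone hb hsum hι hjk)

lemma basis_add_smul_mem_projCone_left (hij : i ≠ j) (hkj : k ≠ j)
    (hx : b i + x • b j ∈ projCone T) : b k + x • b j ∈ projCone T := by
  obtain rfl | hki := eq_or_ne k i
  · exact hx
  · simpa using hT.basis_add_neg_mul_smul_mem_projCone hb hki hkj hij
      (hT.basis_add_neg_one_smul_mem_projCone hb hsum hι hki) hx

lemma basis_add_smul_mem_projCone_of_ne (hij : i ≠ j) (hx : b i + x • b j ∈ projCone T)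
    {i' j' : ι} (hij' : i' ≠ j') : b i' + x • b j' ∈ projCone T := by
  obtain ⟨k, hki, hki'⟩ := ENat.exists_ne_ne_of_three_le hι i i'
  have hik := hT.basis_add_smul_mem_projCone_right hb hsum hι hij hki.symm hx
  have hik' := hT.basis_add_smul_mem_projCone_left hb hsum hι hki.symm hki'.symm hik
  exact hT.basis_add_smul_mem_projCone_right hb hsum hι hki'.symm hij' hik'

lemma basis_add_add_smul_mem_projCone (hx : ∀ i j, i ≠ j → b i + x • b j ∈ projCone T)
    (hy : ∀ i j, i ≠ j → b i + y • b j ∈ projCone T) (hij : i ≠ j) :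
    b i + (x + y) • b j ∈ projCone T := by
  obtain ⟨k, hki, hkj⟩ := ENat.exists_ne_ne_of_three_le hι i j
  have hxy : b i + x • b j + y • b k ∈ projCone T :=
    hT.add_smul_mem_projCone_of_repr hb (hx i j hij) hki.symm (by simp [hij])
      (by simp [hki, hkj]) (hy i k hki.symm)
  have hmeet : b i + (x + y) • b j = (b i + x • b j + y • b k) + y • (b j + (-1 : F) • b k) := by
    module
  rw [hmeet]
  refine hT.add_smul_mem_projCone (A := {b i, b j}) (by grind) hxy
    (hT.basis_add_neg_one_smul_mem_projCone hb hsum hι hkj.symm) (b.coord k) ?_ ?_ ?_ ?_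
  · simp [hki, hkj]
  · simp [hkj]
  · exact hmeet ▸ basis_add_smul_ne_zero b hij _
  · exact hmeet ▸ Submodule.mem_span_pair.2 ⟨1, x + y, by rw [one_smul]⟩

/-- The subfield coordinatizing a closed set `T` that contains the frame given by the basis `b`:
the `x` for which the point `b i + x • b j` of each edge of the simplex lies in `T`. The third
vertex given by `hι` is what makes the von Staudt constructions of sums and products available. -/
def coordSubfield : Subfield F where
  carrier := {x | ∀ i j, i ≠ j → b i + x • b j ∈ projCone T}
  zero_mem' i j _ := by simpa using hb i
  one_mem' _ _ hij := hT.basis_add_mem_projCone hb hsum hij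
  add_mem' hx hy _ _ hij := hT.basis_add_add_smul_mem_projCone hb hsum hι hx hy hij
  neg_mem' {x} hx i j hij := by
    simpa using hT.basis_add_neg_mul_smul_mem_projCone_of_forall hb hι hx
      (fun _ _ ↦ hT.basis_add_mem_projCone hb hsum) hij
  mul_mem' {x y} hx hy i j hij := by
    have hneg {i j : ι} (hij : i ≠ j) :=
      hT.basis_add_neg_mul_smul_mem_projCone_of_forall hb hι hx hy hij
    simpa using hT.basis_add_neg_mul_smul_mem_projCone_of_forall hb hι
      (fun _ _ ↦ hneg)
      (fun _ _ ↦ hT.basis_add_mem_projCone hb hsum) hij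
  inv_mem' x hx i j hij := by
    obtain rfl | hx0 := eq_or_ne x 0
    · simpa using hb i
    · convert smul_mem_projCone (inv_ne_zero hx0) (hx j i hij.symm) using 1
      rw [smul_add, smul_smul, inv_mul_cancel₀ hx0, one_smul, add_comm]

lemma basis_add_sum_smul_mem_projCone {a : ι → F}
    (ha : ∀ k, a k ∈ hT.coordSubfield hb hsum hι) {s : Finset ι} (his : i ∉ s) :
    b i + ∑ k ∈ s, a k • b k ∈ projCone T := by
  classical
  induction s using Finset.induction_on with
  | empty => simpa using hb i
  | insert k s hks ih =>
    obtain ⟨hik, his⟩ := not_or.1 (Finset.mem_insert.not.1 his)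
    rw [Finset.sum_insert hks, add_left_comm, add_comm]
    refine hT.add_smul_mem_projCone_of_repr hb (ih his) hik ?_ ?_ (ha k i k hik)
    · simp [Finsupp.single_apply, his]
    · simp [Finsupp.single_apply, hik, hks]

lemma mem_projCone_iff_forall_div_mem (hi : b.repr v i ≠ 0) :
    v ∈ projCone T ↔ ∀ j, b.repr v j / b.repr v i ∈ hT.coordSubfield hb hsum hι := by
  classical
  refine ⟨fun hv j ↦ ?_, fun h ↦ ?_⟩
  · obtain rfl | hij := eq_or_ne i j
    · rw [div_self hi]
      exact one_mem _
    · exact fun _ _ ↦ hT.basis_add_smul_mem_projCone_of_ne hb hsum hι hij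
        (hT.basis_add_div_smul_mem_projCone hb hv hij hi)
  · have hv : v = b.repr v i •
        (b i + ∑ k ∈ Finset.univ.erase i, (b.repr v k / b.repr v i) • b k) := by
      simp only [smul_add, Finset.smul_sum, smul_smul, mul_div_cancel₀ _ hi]
      rw [Finset.add_sum_erase _ (fun k ↦ b.repr v k • b k) (Finset.mem_univ i), b.sum_repr]
    rw [hv]
    exact smul_mem_projCone hi
      (hT.basis_add_sum_smul_mem_projCone hb hsum hι h (Finset.notMem_erase i _))

end Frame

end ClosedUnderMeets

section Subgeometry

variable {V ι : Type*} [AddCommGroup V] [Module F V]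

/-- The subgeometry over the subfield `E` attached to the basis `b`: the points having homogeneous
coordinates in `E`, that is, whose coordinate ratios lie in `E`. Ratios with denominator zero are
zero, so they impose no condition. -/
def subgeometry (b : Module.Basis ι F V) (E : Subfield F) : Set (ℙ F V) :=
  {p | ∀ i j, b.repr p.rep j / b.repr p.rep i ∈ E}

lemma subgeometry_top (b : Module.Basis ι F V) : subgeometry b ⊤ = Set.univ :=
  Set.eq_univ_of_forall fun _ _ _ ↦ Subfield.mem_top _

theorem ClosedUnderMeets.exists_eq_subgeometry [Fintype ι] {b : Module.Basis ι F V}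
    {T : Set (ℙ F V)} (hT : ClosedUnderMeets T) (hb : ∀ i, b i ∈ projCone T)
    (hsum : ∑ i, b i ∈ projCone T) (hι : 3 ≤ ENat.card ι) :
    ∃ E : Subfield F, T = subgeometry b E := by
  refine ⟨hT.coordSubfield hb hsum hι, Set.ext fun p ↦ ?_⟩
  rw [← rep_mem_projCone_iff]
  refine ⟨fun hp i j ↦ ?_, fun hp ↦ ?_⟩
  · obtain hi | hi := eq_or_ne (b.repr p.rep i) 0
    · rw [hi, div_zero]
      exact zero_mem _
    · exact (hT.mem_projCone_iff_forall_div_mem hb hsum hι hi).1 hp j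
  · obtain ⟨i, hi⟩ : ∃ i, b.repr p.rep i ≠ 0 := by
      by_contra! h
      exact p.rep_nonzero (b.ext_elem fun i ↦ by simp [h i])
    exact (hT.mem_projCone_iff_forall_div_mem hb hsum hι hi).2 (hp i)

end Subgeometry

section Arc

variable {V : Type*} [AddCommGroup V] [Module F V] {K : Set (ℙ F V)}

lemma ncard_subfield_sdiff_zero_add_one (E : Subfield F) [Finite E] :
    ((E : Set F) \ {0}).ncard + 1 = Nat.card E :=
  Set.ncard_sdiff_singleton_add_one (zero_mem E) (Set.toFinite (E : Set F))

lemma IsArc.exists_basis (hV : Module.finrank F V = n + 1) (hK : IsArc n K) :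
    ∃ b : Module.Basis (Fin (n + 1)) F V, ∀ i, b i ∈ projCone K := by
  classical
  have hKfin : K.Finite := Set.finite_of_ncard_pos (n.succ_pos.trans_le hK.1)
  obtain ⟨S, hSK, hS⟩ := Finset.exists_subset_card_eq
    (hK.1.trans_eq (Set.ncard_eq_toFinset_card K hKfin))
  replace hSK : ↑S ⊆ K := fun p hp ↦ hKfin.mem_toFinset.1 (hSK hp)
  let g (i : Fin (n + 1)) : ℙ F V := (S.equivFinOfCardEq hS).symm i
  have hspan : ⊤ ≤ Submodule.span F (Set.range fun i ↦ (g i).rep) := by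
    rw [← hK.2 S hSK hS]
    refine iSup₂_le fun p hp ↦ ?_
    rw [Projectivization.submodule_eq, Submodule.span_singleton_le_iff_mem]
    exact Submodule.subset_span ⟨S.equivFinOfCardEq hS ⟨p, hp⟩, by simp [g]⟩
  refine ⟨basisOfTopLeSpanOfCardEqFinrank _ hspan (by simp [hV]), fun i ↦ ?_⟩
  rw [coe_basisOfTopLeSpanOfCardEqFinrank, rep_mem_projCone_iff]
  exact hSK ((S.equivFinOfCardEq hS).symm i).2

/-- The point represented by a basis vector: a vertex of the simplex of reference. -/
noncomputable def vertex {ι : Type*} (b : Module.Basis ι F V) (i : ι) : ℙ F V :=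
  Projectivization.mk F (b i) (b.ne_zero i)

lemma vertex_injective {ι : Type*} (b : Module.Basis ι F V) : Function.Injective (vertex b) := by
  intro i j hij
  by_contra hne
  obtain ⟨c, hc⟩ := (Projectivization.mk_eq_mk_iff' F _ _ _ _).1 hij
  simpa [hne] using congrArg (b.coord i) hc

variable {b : Module.Basis (Fin (n + 1)) F V} (hK : IsArc n K)

include hK in
lemma IsArc.card_le_of_forall_submodule_le_ker {f : V →ₗ[F] F} (hf : f ≠ 0)
    {S : Finset (ℙ F V)} (hSK : ↑S ⊆ K) (hS : ∀ p ∈ S, p.submodule ≤ LinearMap.ker f) :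
    S.card ≤ n := by
  by_contra! hlt
  obtain ⟨R, hRS, hR⟩ := Finset.exists_subset_card_eq (Nat.succ_le_of_lt hlt)
  have htop := hK.2 R (subset_trans (Finset.coe_subset.2 hRS) hSK) hR
  refine hf (LinearMap.ker_eq_top.1 (top_le_iff.1 ?_))
  exact htop ▸ iSup₂_le fun p hp ↦ hS p (hRS hp)

variable (hb : ∀ i, b i ∈ projCone K)

namespace IsArc

include hK hb

lemma card_lt_card_of_forall_apply_rep_eq_zero {f : V →ₗ[F] F} (hf : f ≠ 0)
    {t : Finset (Fin (n + 1))} (hft : ∀ i ∉ t, f (b i) = 0) {s : Finset (ℙ F V)}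
    (hs : ↑s ⊆ K \ Set.range (vertex b)) (hfs : ∀ p ∈ s, f p.rep = 0) : s.card < t.card := by
  classical
  have hdisj : Disjoint s (tᶜ.map ⟨vertex b, vertex_injective b⟩) := by
    rw [Finset.disjoint_left]
    intro p hp hpt
    obtain ⟨i, -, rfl⟩ := Finset.mem_map.1 hpt
    exact (hs hp).2 ⟨i, rfl⟩
  have hle := hK.card_le_of_forall_submodule_le_ker hf
    (S := s ∪ tᶜ.map ⟨vertex b, vertex_injective b⟩) ?_ ?_
  · rw [Finset.card_union_of_disjoint hdisj, Finset.card_map, Finset.card_compl,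
      Fintype.card_fin] at hle
    omega
  · intro p hp
    obtain hp | hp := Finset.mem_union.1 hp
    · exact (hs hp).1
    · obtain ⟨i, -, rfl⟩ := Finset.mem_map.1 hp
      exact (mk_mem_iff_mem_projCone _).2 (hb i)
  · intro p hp
    obtain hp | hp := Finset.mem_union.1 hp
    · rw [Projectivization.submodule_eq, Submodule.span_singleton_le_iff_mem]
      exact hfs p hp
    · obtain ⟨i, hi, rfl⟩ := Finset.mem_map.1 hp
      exact (Submodule.span_singleton_le_iff_mem _ _).2 (hft i (Finset.mem_compl.1 hi))

lemma repr_rep_ne_zero {p : ℙ F V} (hp : p ∈ K \ Set.range (vertex b)) (i : Fin (n + 1)) :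
    b.repr p.rep i ≠ 0 := by
  intro h
  refine lt_irrefl 1 (hK.card_lt_card_of_forall_apply_rep_eq_zero hb (f := b.coord i)
    (t := {i}) (s := {p}) ?_ ?_ (by simpa using hp) (by simpa using h))
  · exact fun h0 ↦ by simpa using congrArg (· (b i)) h0
  · intro j hj
    simpa using Finsupp.single_eq_of_ne' (Finset.notMem_singleton.1 hj)

lemma repr_rep_mul_ne {p r : ℙ F V} (hp : p ∈ K \ Set.range (vertex b))
    (hr : r ∈ K \ Set.range (vertex b)) (hpr : p ≠ r) {i j : Fin (n + 1)} (hij : i ≠ j) :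
    b.repr p.rep i * b.repr r.rep j ≠ b.repr r.rep i * b.repr p.rep j := by
  classical
  intro h
  have hlt := hK.card_lt_card_of_forall_apply_rep_eq_zero hb
    (f := b.repr p.rep i • b.coord j - b.repr p.rep j • b.coord i) (t := {i, j}) (s := {p, r})
    ?_ ?_ ?_ ?_
  · rw [Finset.card_pair hij, Finset.card_pair hpr] at hlt
    exact lt_irrefl 2 hlt
  · intro h0
    have hpi : b.repr p.rep i = 0 := by simpa [hij.symm] using congrArg (· (b j)) h0
    exact hK.repr_rep_ne_zero hb hp i hpi
  · intro l hl
    simp only [Finset.mem_insert, Finset.mem_singleton, not_or] at hl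
    simp [Ne.symm hl.1, Ne.symm hl.2]
  · simpa [Set.insert_subset_iff] using And.intro hp hr
  · simp [h, mul_comm]

variable {E : Subfield F} [Finite E] (hKE : K ⊆ subgeometry b E)

include hKE

lemma ncard_le_natCard_add (hn : n ≠ 0) : K.ncard ≤ Nat.card E + n := by
  have hlast : Fin.last n ≠ 0 := Fin.last_eq_zero_iff.not.2 hn
  have hle : (K \ Set.range (vertex b)).ncard ≤ ((E : Set F) \ {0}).ncard := by
    refine Set.ncard_le_ncard_of_injOn (fun p ↦ b.repr p.rep (Fin.last n) / b.repr p.rep 0)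
      (fun p hp ↦ ⟨hKE hp.1 _ _, div_ne_zero (hK.repr_rep_ne_zero hb hp _)
        (hK.repr_rep_ne_zero hb hp _)⟩) (fun p hp r hr hpr ↦ ?_) (Set.toFinite (E : Set F)).sdiff
    by_contra hne
    exact hK.repr_rep_mul_ne hb hp hr hne hlast
      ((div_eq_div_iff (hK.repr_rep_ne_zero hb hp 0) (hK.repr_rep_ne_zero hb hr 0)).1 hpr)
  have hvert := Set.ncard_le_ncard_sdiff_add_ncard K (Set.range (vertex b))
  rw [Set.ncard_range_of_injective (vertex_injective b), Nat.card_fin] at hvert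
  have hE := ncard_subfield_sdiff_zero_add_one E
  omega

lemma add_two_le_natCard (hcard : n + 3 ≤ K.ncard) : n + 2 ≤ Nat.card E := by
  have hvert := Set.ncard_le_ncard_sdiff_add_ncard K (Set.range (vertex b))
  rw [Set.ncard_range_of_injective (vertex_injective b), Nat.card_fin] at hvert
  have hlt : 1 < (K \ Set.range (vertex b)).ncard := by omega
  obtain ⟨p, hp, r, hr, hpr⟩ := (Set.one_lt_ncard (Set.finite_of_ncard_pos (by omega))).1 hlt
  have hp0 := hK.repr_rep_ne_zero hb hp
  have hr0 := hK.repr_rep_ne_zero hb hr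
  have hle : (Set.univ : Set (Fin (n + 1))).ncard ≤ ((E : Set F) \ {0}).ncard := by
    refine Set.ncard_le_ncard_of_injOn
      (fun i ↦ b.repr p.rep i / b.repr p.rep 0 / (b.repr r.rep i / b.repr r.rep 0))
      (fun i _ ↦ ⟨div_mem (hKE hp.1 _ _) (hKE hr.1 _ _),
        div_ne_zero (div_ne_zero (hp0 i) (hp0 0)) (div_ne_zero (hr0 i) (hr0 0))⟩)
      (fun i _ j _ hij ↦ ?_) (Set.toFinite (E : Set F)).sdiff
    by_contra hne
    refine hK.repr_rep_mul_ne hb hp hr hpr hne ?_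
    field_simp [hp0 0, hr0 0, hr0 i, hr0 j] at hij
    linear_combination hij
  rw [Set.ncard_univ, Nat.card_fin] at hle
  have hE := ncard_subfield_sdiff_zero_add_one E
  omega

end IsArc

lemma IsArc.exists_frame (hV : Module.finrank F V = n + 1) (hK : IsArc n K)
    (hcard : n + 2 ≤ K.ncard) :
    ∃ b : Module.Basis (Fin (n + 1)) F V, (∀ i, b i ∈ projCone K) ∧ ∑ i, b i ∈ projCone K := by
  obtain ⟨b, hb⟩ := hK.exists_basis hV
  have hrange : (Set.range (vertex b)).ncard < K.ncard := by
    rwa [Set.ncard_range_of_injective (vertex_injective b), Nat.card_fin]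
  obtain ⟨u, hu⟩ := Set.exists_mem_notMem_of_ncard_lt_ncard hrange
  have hui := hK.repr_rep_ne_zero hb hu
  refine ⟨b.unitsSMul fun i ↦ Units.mk0 _ (hui i), fun i ↦ ?_, ?_⟩
  · rw [Module.Basis.unitsSMul_apply]
    exact smul_mem_projCone (hui i) (hb i)
  · simpa [Module.Basis.unitsSMul_apply, Units.smul_def, b.sum_repr, rep_mem_projCone_iff]
      using hu.1

theorem arc_ptClosure_eq_univ_general (hV : Module.finrank F V = n + 1) (hn : 2 ≤ n)
    (hK : IsArc n K) (hcard : n + 2 ≤ K.ncard)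
    (hE : ∀ E : Subfield F, E ≠ ⊤ → Finite E ∧ n + 3 ≤ K.ncard ∧
      (Nat.card E < n + 2 ∨ Nat.card E + n < K.ncard)) :
    ptClosure K = Set.univ := by
  obtain ⟨b, hb, hsum⟩ := hK.exists_frame hV hcard
  have hKcl : K ⊆ ptClosure K := Set.subset_sInter fun _ hT ↦ hT.1
  obtain ⟨E, hclE⟩ := (closedUnderMeets_ptClosure K).exists_eq_subgeometry
    (fun i ↦ projCone_mono hKcl (hb i)) (projCone_mono hKcl hsum)
    (by simpa using Nat.cast_le (α := ℕ∞).2 (Nat.succ_le_succ hn))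
  obtain rfl | hne := eq_or_ne E ⊤
  · rw [hclE, subgeometry_top]
  · have hKE : K ⊆ subgeometry b E := hclE ▸ hKcl
    obtain ⟨hfin, hcard', hE⟩ := hE E hne
    have hlower := hK.add_two_le_natCard hb hKE hcard'
    have hupper := hK.ncard_le_natCard_add hb hKE (by omega)
    omega

end Arc

section ProperSubfield

variable [Finite F] {E : Subfield F}

lemma exists_natCard_eq_pow_of_ne_top (hE : E ≠ ⊤) : ∃ k, 2 ≤ k ∧ Nat.card F = Nat.card E ^ k := by
  refine ⟨Module.finrank E F, ?_, Module.natCard_eq_pow_finrank⟩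
  have hpos : 0 < Module.finrank E F := Module.finrank_pos
  have hne : Module.finrank E F ≠ 1 := by
    intro h
    have hsurj := (Algebra.finrank_eq_one_iff_bijective_algebraMap.1 h).2
    refine hE (eq_top_iff.2 fun x _ ↦ ?_)
    obtain ⟨y, rfl⟩ := hsurj x
    exact y.2
  omega

lemma not_prime_natCard_of_ne_top (hE : E ≠ ⊤) : ¬ (Nat.card F).Prime := by
  obtain ⟨k, hk, hcard⟩ := exists_natCard_eq_pow_of_ne_top hE
  exact hcard ▸ Nat.Prime.not_prime_pow hk

lemma natCard_lt_or_natCard_add_lt_of_ne_top (hE : E ≠ ⊤) (m : ℕ) :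
    Nat.card E < m + 2 ∨ Nat.card E + m < Nat.card F := by
  obtain ⟨k, hk, hcard⟩ := exists_natCard_eq_pow_of_ne_top hE
  have hsq : Nat.card E ^ 2 ≤ Nat.card F := hcard ▸ Nat.pow_le_pow_right Nat.card_pos hk
  by_contra! h
  nlinarith

end ProperSubfield

/-- Let `K` be a `q`-arc in `PG(n,q)` with `q ≥ n+3` (and `n ≥ 2`), or with `q = n+2` a prime
(and `n ≥ 2`).  Then the closure of `K` is all of `PG(n,q)`. -/
theorem arc_ptClosure_eq_univ [Fintype F] {q : ℕ} (hq : Fintype.card F = q)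
    (K : Set (ℙ F (Fin (n + 1) → F))) (hK : IsArc n K) (hKcard : K.ncard = q)
    (hcase : (2 ≤ n ∧ n + 3 ≤ q) ∨ (2 ≤ n ∧ q = n + 2 ∧ Nat.Prime q)) :
    ptClosure K = Set.univ := by
  have hF : Nat.card F = K.ncard := by rw [Nat.card_eq_fintype_card, hq, hKcard]
  refine arc_ptClosure_eq_univ_general (Module.finrank_fin_fun F) (by omega) hK (by omega)
    fun E hE ↦ ⟨inferInstance, ?_, hF ▸ natCard_lt_or_natCard_add_lt_of_ne_top hE n⟩
  have hprime : ¬ q.Prime := by simpa only [hF, hKcard] using not_prime_natCard_of_ne_top hE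
  rw [hKcard]
  exact (hcase.resolve_right fun h ↦ hprime h.2.2).2
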